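/- arXiv:2504.04324 — 4 statements merged into one kernel-verified Lean document; each statement's English description precedes it below -/
import Mathlib

section
/- (Theorem 1, local flatness of pure-feedback systems.) Suppose each f̄_i : (ℝ^m)^{i+1} → ℝ^m is C^∞ on a neighborhood of (x*, u*) and the partial Jacobians D_{x_{i+1}} f̄_i(x*_1, …, x*_{i+1}), i = 1, …, r (with x_{r+1} := u), are invertible. Then there exist an open neighborhood N of (x*, u*) and C^∞ maps Φ_k : (ℝ^m)^k → ℝ^m for k = 1, …, r and Ψ : (ℝ^m)^{r+1} → ℝ^m such that: for every open interval J and every collection of curves x_i : J → ℝ^m (i = 1, …, r) and u : J → ℝ^m, with each x_i differentiable, x_1 r-times differentiable, u continuous, satisfying ẋ_i(t) = f̄_i(x_1(t), …, x_{i+1}(t)) for i < r, ẋ_r(t) = f̄_r(x_1(t), …, x_r(t), u(t)), and (x(t), u(t)) ∈ N for all t ∈ J, one has, writing y := x_1, x_k(t) = Φ_k(y(t), ẏ(t), …, y^{(k−1)}(t)) for all k = 1, …, r and u(t) = Ψ(y(t), ẏ(t), …, y^{(r)}(t)) for all t ∈ J. In particular, y = x_1 is a flat output of the nominal system. -/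
/-!
Let `F = (f̄_1, …, f̄_r, 0)` be the state part of the vector field, extended by zero in the input
slot, and let `e_0(p) = p_0`, `e_{k+1} = L_F e_k` be the iterated Lie derivatives of the output
(`lieOut`). Since `f̄_i` depends on the slots up to `i + 1`, `e_k` depends only on the slots up to
`k` (`lieOut_dep`). Hence, for `k < r`, the input does not enter `e_k`, and along a trajectory
`y^{(k)} = e_k(x, u)` for all `k ≤ r` although `u` is only continuous (`lieOut_traj`).

The partial derivative of `e_{k+1}` in slot `k + 1` at the operating point is the composition of
the partial derivative of `e_k` in slot `k` with the partial Jacobian of the `k`-th stage map, so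
all these diagonal blocks are injective (`lieOut_diag`). The map
`p ↦ (e_0 p, …, e_k p, p_{k+1}, …, p_r)` (`flatMap`) therefore has a block triangular, invertible
derivative, and the inverse function theorem followed by a cutoff gives a globally smooth map `G_k`
which is a left inverse of it near the operating point (`exists_smooth_left_inv`). Freezing the
slots after `k` at the operating point and reading slot `k` of `G_k` yields `Φ_k`, which depends
only on `y, …, y^{(k)}`.
-/

open Filter Topology Set

/-! ### A globally smooth local left inverse -/

/-- A function which is smooth near `b` agrees near `b` with a globally smooth function. -/
lemma exists_contDiff_extension {X Y : Type*} [NormedAddCommGroup X] [NormedSpace ℝ X]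
    [FiniteDimensional ℝ X] [NormedAddCommGroup Y] [NormedSpace ℝ Y]
    (g : X → Y) (b : X) (hg : ∀ᶠ p in 𝓝 b, ContDiffAt ℝ (⊤ : ℕ∞) g p) :
    ∃ G : X → Y, ContDiff ℝ (⊤ : ℕ∞) G ∧ G =ᶠ[𝓝 b] g := by
  obtain ⟨ε, hε, hball⟩ := Metric.eventually_nhds_iff_ball.1 hg
  let χ : ContDiffBump b := ⟨ε / 4, ε / 2, by positivity, by linarith⟩
  refine ⟨fun p => χ p • g p, contDiff_iff_contDiffAt.2 fun p => ?_, ?_⟩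
  · by_cases hp : p ∈ Metric.ball b ε
    · exact χ.contDiffAt.smul (hball p hp)
    · have hp' : p ∉ tsupport χ := by
        rw [χ.tsupport_eq]
        intro h
        refine hp (Metric.closedBall_subset_ball ?_ h)
        change ε / 2 < ε
        linarith
      have h0 : (fun p => χ p • g p) =ᶠ[𝓝 p] fun _ => 0 := by
        filter_upwards [notMem_tsupport_iff_eventuallyEq.1 hp'] with q hq
        rw [hq]; simp
      exact contDiffAt_const.congr_of_eventuallyEq h0
  · filter_upwards [χ.eventuallyEq_one] with p hp
    rw [hp]; simp

/-- Inverse function theorem in the form used below. The hypothesis is smoothness on an open set,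
not just `ContDiffAt` at `a`: the latter would not give a neighborhood common to all orders. -/
lemma exists_smooth_left_inv {X : Type*} [NormedAddCommGroup X] [NormedSpace ℝ X]
    [FiniteDimensional ℝ X] (h : X → X) (N0 : Set X) (hN0 : IsOpen N0)
    (hh : ContDiffOn ℝ (⊤ : ℕ∞) h N0) (a : X) (ha : a ∈ N0)
    (hinj : ∀ v, fderiv ℝ h a v = 0 → v = 0) :
    ∃ G : X → X, ContDiff ℝ (⊤ : ℕ∞) G ∧ ∀ᶠ p in 𝓝 a, G (h p) = p := by
  have : CompleteSpace X := FiniteDimensional.complete ℝ X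
  have hat : ∀ p ∈ N0, ContDiffAt ℝ (⊤ : ℕ∞) h p := fun p hp => hh.contDiffAt (hN0.mem_nhds hp)
  have htop : ((⊤ : ℕ∞) : WithTop ℕ∞) ≠ 0 := by simp
  have hdiff : ∀ p ∈ N0, DifferentiableAt ℝ h p := fun p hp => (hat p hp).differentiableAt htop
  have hinj' : Function.Injective (fderiv ℝ h a : X →ₗ[ℝ] X) :=
    (injective_iff_map_eq_zero _).2 hinj
  let L : X ≃L[ℝ] X :=
    (LinearEquiv.ofInjectiveEndo (fderiv ℝ h a : X →ₗ[ℝ] X) hinj').toContinuousLinearEquiv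
  have hL : (L : X →L[ℝ] X) = fderiv ℝ h a := by
    ext v; rfl
  have hder : HasFDerivAt h (L : X →L[ℝ] X) a := hL ▸ (hdiff a ha).hasFDerivAt
  let φ := (hat a ha).toOpenPartialHomeomorph h hder htop
  have hφ : (φ : X → X) = h := rfl
  have haφ : a ∈ φ.source := (hat a ha).mem_toOpenPartialHomeomorph_source hder htop
  have hcont : ContinuousAt (fderiv ℝ h) a :=
    (hat a ha).continuousAt_fderiv htop
  have hinv : ∀ᶠ p in 𝓝 a, p ∈ N0 ∧ ∃ M : X ≃L[ℝ] X, (M : X →L[ℝ] X) = fderiv ℝ h p := by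
    have hnhds := ContinuousLinearEquiv.nhds L
    rw [hL] at hnhds
    exact (hN0.eventually_mem ha).and (hcont hnhds)
  have hsa : φ.symm (h a) = a := φ.left_inv haφ
  have hta : h a ∈ φ.target := φ.map_source haφ
  have hsymm : ∀ᶠ q in 𝓝 (h a), ContDiffAt ℝ (⊤ : ℕ∞) φ.symm q := by
    have hc : Tendsto φ.symm (𝓝 (h a)) (𝓝 a) := by
      have := φ.continuousAt_symm hta
      rwa [ContinuousAt, hsa] at this
    filter_upwards [hc.eventually hinv, φ.open_target.mem_nhds hta] with q hq hqt
    obtain ⟨hqN, M, hM⟩ := hq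
    refine φ.contDiffAt_symm (f₀' := M) hqt ?_ (hat _ hqN)
    rw [hM]
    exact (hdiff _ hqN).hasFDerivAt
  obtain ⟨G, hG, hGe⟩ := exists_contDiff_extension φ.symm (h a) hsymm
  refine ⟨G, hG, ?_⟩
  filter_upwards [(hdiff a ha).continuousAt.eventually hGe, φ.open_source.mem_nhds haφ] with p hp hps
  rw [hp]
  exact φ.left_inv hps

/-! ### Functions of the first slots -/

section Flat

variable {E : Type*} [NormedAddCommGroup E] [NormedSpace ℝ E] {r : ℕ}

/-- `g` depends only on the slots `0, …, k` of its argument. -/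
def DepUpTo (k : ℕ) (g : (Fin (r + 1) → E) → E) : Prop :=
  ∀ p q : Fin (r + 1) → E, (∀ j : Fin (r + 1), (j : ℕ) ≤ k → p j = q j) → g p = g q

/-- No differentiability is needed: `g` is invariant under translations in the slots after `k`, and
where it is not differentiable both sides are zero. -/
lemma DepUpTo.fderiv_eq {k : ℕ} {g : (Fin (r + 1) → E) → E} (hg : DepUpTo k g)
    {p q v w : Fin (r + 1) → E} (hpq : ∀ j : Fin (r + 1), (j : ℕ) ≤ k → p j = q j)
    (hvw : ∀ j : Fin (r + 1), (j : ℕ) ≤ k → v j = w j) :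
    fderiv ℝ g p v = fderiv ℝ g q w := by
  have h1 : fderiv ℝ g p = fderiv ℝ g q := by
    have hfun : (fun z => g (z + (q - p))) = g := by
      funext z
      refine hg _ _ fun j hj => ?_
      simp [hpq j hj]
    have h2 := fderiv_comp_add_right (𝕜 := ℝ) (f := g) (x := p) (q - p)
    rw [hfun] at h2
    simpa using h2
  rw [h1]
  by_cases hd : DifferentiableAt ℝ g q
  · rw [← sub_eq_zero, ← map_sub, ← hd.lineDeriv_eq_fderiv, lineDeriv]
    have hconst : (fun t : ℝ => g (q + t • (v - w))) = fun _ => g q := by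
      funext t
      refine hg _ _ fun j hj => ?_
      simp [hvw j hj]
    rw [hconst]
    exact deriv_const 0 (g q)
  · rw [fderiv_zero_of_not_differentiableAt hd]
    rfl

/-! ### Iterated Lie derivatives of the output -/

/-- The vector field of the system on states and inputs, with input rate set to zero. -/
def field (f : Fin r → (Fin (r + 1) → E) → E) (p : Fin (r + 1) → E) : Fin (r + 1) → E :=
  Fin.snoc (α := fun _ => E) (fun i => f i p) 0

/-- The `k`-th Lie derivative along `field f` of the output `p ↦ p 0`. -/
noncomputable def lieOut (f : Fin r → (Fin (r + 1) → E) → E) : ℕ → (Fin (r + 1) → E) → E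
  | 0 => fun p => p 0
  | k + 1 => fun p => fderiv ℝ (lieOut f k) p (field f p)

lemma field_castSucc (f : Fin r → (Fin (r + 1) → E) → E) (p : Fin (r + 1) → E) (i : Fin r) :
    field f p i.castSucc = f i p := by
  simp [field]

lemma field_last (f : Fin r → (Fin (r + 1) → E) → E) (p : Fin (r + 1) → E) :
    field f p (Fin.last r) = 0 := by
  simp [field]

lemma lieOut_dep (f : Fin r → (Fin (r + 1) → E) → E)
    (hf : ∀ i : Fin r, DepUpTo ((i : ℕ) + 1) (f i)) (k : ℕ) : DepUpTo k (lieOut f k) := by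
  induction k with
  | zero => exact fun p q h => h 0 le_rfl
  | succ k ih =>
    intro p q h
    refine ih.fderiv_eq (fun j hj => h j (by omega)) fun j hj => ?_
    induction j using Fin.lastCases with
    | last => simp [field_last]
    | cast i =>
      rw [field_castSucc, field_castSucc]
      refine hf i _ _ fun j' hj' => h j' ?_
      simp only [Fin.val_castSucc] at hj
      omega

lemma field_contDiffOn (f : Fin r → (Fin (r + 1) → E) → E) (N0 : Set (Fin (r + 1) → E))
    (hs : ∀ i, ContDiffOn ℝ (⊤ : ℕ∞) (f i) N0) : ContDiffOn ℝ (⊤ : ℕ∞) (field f) N0 := by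
  refine contDiffOn_pi.2 fun j => ?_
  induction j using Fin.lastCases with
  | last => simpa [field_last] using contDiffOn_const
  | cast i => simpa only [field_castSucc] using hs i

lemma lieOut_contDiffOn (f : Fin r → (Fin (r + 1) → E) → E) (N0 : Set (Fin (r + 1) → E))
    (hN0 : IsOpen N0) (hs : ∀ i, ContDiffOn ℝ (⊤ : ℕ∞) (f i) N0) (k : ℕ) :
    ContDiffOn ℝ (⊤ : ℕ∞) (lieOut f k) N0 := by
  induction k with
  | zero => exact (contDiff_apply ℝ E (0 : Fin (r + 1))).contDiffOn
  | succ k ih => exact (ih.fderiv_of_isOpen hN0 le_rfl).clm_apply (field_contDiffOn f N0 hs)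

/-- Injectivity of the diagonal blocks `∂ e_k / ∂ x_k` at the operating point. -/
lemma lieOut_diag (f : Fin r → (Fin (r + 1) → E) → E) (xs : Fin (r + 1) → E)
    (hf : ∀ i : Fin r, DepUpTo ((i : ℕ) + 1) (f i))
    (hd : ∀ i, DifferentiableAt ℝ (f i) xs)
    (hed : ∀ k, DifferentiableAt ℝ (lieOut f k) xs)
    (hjac : ∀ (i : Fin r) (v : E), fderiv ℝ (f i) xs (Pi.single i.succ v) = 0 → v = 0)
    (k : ℕ) (hk : k < r + 1) (v : E)
    (hv : fderiv ℝ (lieOut f k) xs (Pi.single ⟨k, hk⟩ v) = 0) : v = 0 := by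
  induction k generalizing v with
  | zero =>
    have h0 : fderiv ℝ (lieOut f 0) xs =
        ContinuousLinearMap.proj (R := ℝ) (φ := fun _ : Fin (r + 1) => E) 0 :=
      (ContinuousLinearMap.proj (R := ℝ) (φ := fun _ : Fin (r + 1) => E) 0).fderiv
    rw [h0] at hv
    simpa using hv
  | succ k ih =>
    have hkr : k < r := by omega
    set w : Fin (r + 1) → E := Pi.single ⟨k + 1, hk⟩ v with hw
    have hw0 : ∀ j : Fin (r + 1), (j : ℕ) ≤ k → w j = 0 := fun j hj => by
      rw [hw, Pi.single_eq_of_ne]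
      rintro rfl
      simp at hj
    -- in the direction of slot `k + 1`, only the argument `field f` of `e_{k+1}` varies
    have hfun : (fun t : ℝ => lieOut f (k + 1) (xs + t • w)) =
        fun t : ℝ => fderiv ℝ (lieOut f k) xs (field f (xs + t • w)) := by
      funext t
      refine (lieOut_dep f hf k).fderiv_eq (fun j hj => ?_) fun _ _ => rfl
      simp [hw0 j hj]
    have hfield : HasDerivAt (fun t : ℝ => field f (xs + t • w))
        (Fin.snoc (α := fun _ => E) (fun i => fderiv ℝ (f i) xs w) 0) 0 := by
      refine hasDerivAt_pi.2 fun j => ?_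
      induction j using Fin.lastCases with
      | last => simpa [field_last] using hasDerivAt_const (0 : ℝ) (0 : E)
      | cast i =>
        simp only [field_castSucc, Fin.snoc_castSucc]
        exact (hd i).hasFDerivAt.hasLineDerivAt w
    have hderiv := ((fderiv ℝ (lieOut f k) xs).hasFDerivAt.comp_hasDerivAt (0 : ℝ) hfield).deriv
    rw [← (hed (k + 1)).lineDeriv_eq_fderiv, lineDeriv, hfun] at hv
    have hv' := hderiv.symm.trans hv
    refine hjac ⟨k, hkr⟩ v (ih (by omega) _ ?_)
    rw [← hv']
    refine (lieOut_dep f hf k).fderiv_eq (fun _ _ => rfl) fun j hj => ?_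
    induction j using Fin.lastCases with
    | last => simp at hj; omega
    | cast i =>
      rw [Fin.snoc_castSucc]
      simp only [Fin.val_castSucc] at hj
      rcases hj.lt_or_eq with hlt | heq
      · rw [Pi.single_eq_of_ne (by intro h; simp [Fin.ext_iff] at h; omega)]
        have h0 := (hf i).fderiv_eq (p := xs) (q := xs) (v := w) (w := 0) (fun _ _ => rfl)
          fun j' hj' => hw0 j' (by omega)
        rw [h0, map_zero]
      · subst heq
        exact Pi.single_eq_same (M := fun _ : Fin (r + 1) => E) i.castSucc _

/-- The map `p ↦ (e_0 p, …, e_k p, p_{k+1}, …, p_r)`. -/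
noncomputable def flatMap (f : Fin r → (Fin (r + 1) → E) → E) (k : ℕ)
    (p : Fin (r + 1) → E) : Fin (r + 1) → E :=
  fun j => if (j : ℕ) ≤ k then lieOut f j p else p j

lemma flatMap_contDiffOn (f : Fin r → (Fin (r + 1) → E) → E) (N0 : Set (Fin (r + 1) → E))
    (hN0 : IsOpen N0) (hs : ∀ i, ContDiffOn ℝ (⊤ : ℕ∞) (f i) N0) (k : ℕ) :
    ContDiffOn ℝ (⊤ : ℕ∞) (flatMap f k) N0 := by
  refine contDiffOn_pi.2 fun j => ?_
  by_cases hj : (j : ℕ) ≤ k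
  · simpa only [flatMap, if_pos hj] using lieOut_contDiffOn f N0 hN0 hs j
  · simpa only [flatMap, if_neg hj] using (contDiff_apply ℝ E j).contDiffOn

/-- The derivative of `flatMap` is block triangular with injective diagonal blocks. -/
lemma flatMap_inj (f : Fin r → (Fin (r + 1) → E) → E) (xs : Fin (r + 1) → E)
    (hf : ∀ i : Fin r, DepUpTo ((i : ℕ) + 1) (f i))
    (hd : ∀ i, DifferentiableAt ℝ (f i) xs)
    (hed : ∀ k, DifferentiableAt ℝ (lieOut f k) xs)
    (hjac : ∀ (i : Fin r) (v : E), fderiv ℝ (f i) xs (Pi.single i.succ v) = 0 → v = 0)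
    (k : ℕ) (hT : DifferentiableAt ℝ (flatMap f k) xs) (v : Fin (r + 1) → E)
    (hv : fderiv ℝ (flatMap f k) xs v = 0) : v = 0 := by
  have hcomp : ∀ j, fderiv ℝ (fun p => flatMap f k p j) xs v = 0 := fun j => by
    have h1 := (hasFDerivAt_pi'.1 hT.hasFDerivAt j).fderiv
    rw [h1]
    simp [hv]
  have key : ∀ n : ℕ, ∀ hn : n < r + 1, v ⟨n, hn⟩ = 0 := by
    intro n
    induction n using Nat.strong_induction_on with
    | _ n ih =>
      intro hn
      have hc := hcomp ⟨n, hn⟩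
      by_cases hnk : n ≤ k
      · simp only [flatMap, if_pos hnk] at hc
        refine lieOut_diag f xs hf hd hed hjac n hn _ (Eq.trans ?_ hc)
        refine (lieOut_dep f hf n).fderiv_eq (fun _ _ => rfl) fun j hj => ?_
        rcases hj.lt_or_eq with hlt | heq
        · rw [Pi.single_eq_of_ne (by intro h; simp [Fin.ext_iff] at h; omega)]
          exact (ih j hlt j.2).symm
        · subst heq
          exact Pi.single_eq_same (M := fun _ : Fin (r + 1) => E) j _
      · simp only [flatMap, if_neg hnk] at hc
        have h0 : fderiv ℝ (fun p : Fin (r + 1) → E => p ⟨n, hn⟩) xs =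
            ContinuousLinearMap.proj (R := ℝ) (φ := fun _ : Fin (r + 1) => E) ⟨n, hn⟩ :=
          (ContinuousLinearMap.proj (R := ℝ) (φ := fun _ : Fin (r + 1) => E) ⟨n, hn⟩).fderiv
        rw [h0] at hc
        simpa using hc
  funext j
  exact key j j.2

/-! ### Trajectories -/

/-- Along a trajectory, the derivatives of the output are its iterated Lie derivatives. -/
lemma lieOut_traj (hr : 1 ≤ r) (f : Fin r → (Fin (r + 1) → E) → E)
    (hf : ∀ i : Fin r, DepUpTo ((i : ℕ) + 1) (f i)) (J : Set ℝ) (hJ : IsOpen J)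
    (x : Fin r → ℝ → E) (u : ℝ → E) (y : ℕ → ℝ → E) (hy0 : y 0 = x ⟨0, hr⟩)
    (hy : ∀ j : ℕ, j < r → ∀ t ∈ J, HasDerivAt (y j) (y (j + 1) t) t)
    (hx : ∀ t ∈ J, ∀ i : Fin r,
      HasDerivAt (x i) (f i (Fin.snoc (α := fun _ => E) (fun i' => x i' t) (u t))) t)
    (hed : ∀ t ∈ J, ∀ k,
      DifferentiableAt ℝ (lieOut f k) (Fin.snoc (α := fun _ => E) (fun i' => x i' t) (u t)))
    (k : ℕ) (hk : k ≤ r) (t : ℝ) (ht : t ∈ J) :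
    y k t = lieOut f k (Fin.snoc (α := fun _ => E) (fun i' => x i' t) (u t)) := by
  induction k generalizing t with
  | zero =>
    have h0 : (0 : Fin (r + 1)) = Fin.castSucc ⟨0, hr⟩ := rfl
    simp only [lieOut]
    rw [h0, Fin.snoc_castSucc, hy0]
  | succ k ih =>
    -- freezing the input at its value at time `t` does not change `e_k`, because `k < r`
    have hX : HasDerivAt (fun s => (Fin.snoc (α := fun _ => E) (fun i' => x i' s) (u t) :
          Fin (r + 1) → E))
        (field f (Fin.snoc (α := fun _ => E) (fun i' => x i' t) (u t))) t := by
      refine hasDerivAt_pi.2 fun j => ?_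
      induction j using Fin.lastCases with
      | last => simpa [field_last] using hasDerivAt_const t (u t)
      | cast i =>
        simp only [field_castSucc, Fin.snoc_castSucc]
        exact hx t ht i
    have h1 := (hed t ht k).hasFDerivAt.comp_hasDerivAt t hX
    refine (hy k (by omega) t ht).unique (h1.congr_of_eventuallyEq ?_)
    filter_upwards [hJ.mem_nhds ht] with s hs
    rw [ih (by omega) s hs]
    refine lieOut_dep f hf k _ _ fun j hj => ?_
    induction j using Fin.lastCases with
    | last => simp at hj; omega
    | cast i => simp

end Flat


/-!
Statement 2 (Theorem 1 of the paper): local differential flatness of regular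
pure-feedback systems, with flat output `y = x_1`.

Encoding: the full state-input tuple is `Fin.snoc (fun i => x i t) (u t) :
Fin (r+1) → (Fin m → ℝ)` (sub-state `x_i` at 0-indexed slot `i - 1`, the input
`u = x_{r+1}` at slot `r`).  The stage map `f̄_i` (1-indexed `i = i0 + 1` for
`i0 : Fin r`) depends only on slots `j ≤ i0 + 1`.  The flatness maps are
encoded as `Φ : Fin (r+1) → _`, where `Φ k0` represents `Φ_{k0+1}`, a function
of `(y, ẏ, …, y^{(k0)})` (it depends only on slots `j ≤ k0` of the tuple of
derivatives of the flat output), and `Ψ = Φ r` (the last index).  The higher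
derivatives of `y = x_1` are encoded by a chain `y : ℕ → ℝ → (Fin m → ℝ)` with
`y 0 = x_1` and `y (j+1)` the derivative of `y j` on `J`.
-/
theorem stmt2
    (m r : ℕ) (hm : 1 ≤ m) (hr : 1 ≤ r)
    (f : Fin r → ((Fin (r + 1) → (Fin m → ℝ)) → (Fin m → ℝ)))
    (xstar : Fin (r + 1) → (Fin m → ℝ))
    -- `f̄_i` depends only on `x_1, …, x_{i+1}` (pure-feedback form)
    (hfdep : ∀ i : Fin r, ∀ p q : Fin (r + 1) → (Fin m → ℝ),
      (∀ j : Fin (r + 1), (j : ℕ) ≤ (i : ℕ) + 1 → p j = q j) → f i p = f i q)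
    -- `f̄_i` is `C^∞` on a neighborhood `N0` of the operating point `(x*, u*)`
    (N0 : Set (Fin (r + 1) → (Fin m → ℝ))) (hN0 : IsOpen N0) (hx0 : xstar ∈ N0)
    (hsmooth : ∀ i : Fin r, ContDiffOn ℝ (⊤ : ℕ∞) (f i) N0)
    -- invertible partial Jacobians `D_{x_{i+1}} f̄_i` at the operating point
    (hjac : ∀ i : Fin r,
      Function.Bijective
        (fderiv ℝ (fun v => f i (Function.update xstar i.succ v)) (xstar i.succ))) :
    ∃ N : Set (Fin (r + 1) → (Fin m → ℝ)), IsOpen N ∧ xstar ∈ N ∧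
      ∃ Φ : Fin (r + 1) → ((Fin (r + 1) → (Fin m → ℝ)) → (Fin m → ℝ)),
        -- the maps `Φ_1, …, Φ_r` and `Ψ = Φ_{r+1}` are `C^∞`
        (∀ k : Fin (r + 1), ContDiff ℝ (⊤ : ℕ∞) (Φ k)) ∧
        -- `Φ_{k0+1}` is a function of `(y, ẏ, …, y^{(k0)})` only
        (∀ k : Fin (r + 1), ∀ p q : Fin (r + 1) → (Fin m → ℝ),
          (∀ j : Fin (r + 1), (j : ℕ) ≤ (k : ℕ) → p j = q j) → Φ k p = Φ k q) ∧
        -- for every open interval `J` and trajectory of the nominal system staying in `N`: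
        ∀ (J : Set ℝ), IsOpen J → J.OrdConnected →
        ∀ (x : Fin r → ℝ → (Fin m → ℝ)) (u : ℝ → (Fin m → ℝ))
          (y : ℕ → ℝ → (Fin m → ℝ)),
          -- `y = x_1` together with its higher derivatives on `J`
          y 0 = x ⟨0, hr⟩ →
          (∀ j : ℕ, j < r → ∀ t ∈ J, HasDerivAt (y j) (y (j + 1) t) t) →
          -- `u` is continuous on `J`
          ContinuousOn u J →
          -- the curves satisfy the nominal pure-feedback dynamics on `J`
          (∀ t ∈ J, ∀ i : Fin r,
            HasDerivAt (x i) (f i (Fin.snoc (fun i' => x i' t) (u t))) t) →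
          -- the trajectory remains in `N`
          (∀ t ∈ J, Fin.snoc (fun i' => x i' t) (u t) ∈ N) →
          -- conclusion: states and input are recovered from the flat output `y = x_1`
          ∀ t ∈ J,
            (∀ k : Fin r, x k t = Φ k.castSucc (fun j : Fin (r + 1) => y (j : ℕ) t)) ∧
            u t = Φ (Fin.last r) (fun j : Fin (r + 1) => y (j : ℕ) t) := by
  classical
  have hf : ∀ i : Fin r, DepUpTo ((i : ℕ) + 1) (f i) := fun i p q h => hfdep i p q h
  have htop : ((⊤ : ℕ∞) : WithTop ℕ∞) ≠ 0 := by simp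
  have hd : ∀ i, ∀ p ∈ N0, DifferentiableAt ℝ (f i) p := fun i p hp =>
    ((hsmooth i).contDiffAt (hN0.mem_nhds hp)).differentiableAt htop
  have hed : ∀ k, ∀ p ∈ N0, DifferentiableAt ℝ (lieOut f k) p := fun k p hp =>
    ((lieOut_contDiffOn f N0 hN0 hsmooth k).contDiffAt (hN0.mem_nhds hp)).differentiableAt htop
  have hjac' : ∀ (i : Fin r) (v : Fin m → ℝ),
      fderiv ℝ (f i) xstar (Pi.single i.succ v) = 0 → v = 0 := by
    intro i v hv
    have hupd := hasFDerivAt_update (𝕜 := ℝ) xstar (i := i.succ) (xstar i.succ)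
    have hfi : HasFDerivAt (f i) (fderiv ℝ (f i) xstar)
        (Function.update xstar i.succ (xstar i.succ)) := by
      rw [Function.update_eq_self]
      exact (hd i xstar hx0).hasFDerivAt
    have hcomp := (hfi.comp (xstar i.succ) hupd).fderiv
    have heq : fderiv ℝ (fun v => f i (Function.update xstar i.succ v)) (xstar i.succ) v
        = fderiv ℝ (f i) xstar (Pi.single i.succ v) := by
      refine (DFunLike.congr_fun hcomp v).trans ?_
      rw [ContinuousLinearMap.comp_apply]
      congr 1
      funext j
      by_cases hj : j = i.succ
      · subst hj; simp
      · simp [hj]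
    exact (hjac i).1 ((heq.trans hv).trans (map_zero _).symm)
  have hG : ∀ k : Fin (r + 1), ∃ G : (Fin (r + 1) → (Fin m → ℝ)) → (Fin (r + 1) → (Fin m → ℝ)),
      ContDiff ℝ (⊤ : ℕ∞) G ∧ ∀ᶠ p in 𝓝 xstar, G (flatMap f k p) = p := by
    intro k
    have hT := flatMap_contDiffOn f N0 hN0 hsmooth k
    exact exists_smooth_left_inv (flatMap f k) N0 hN0 hT xstar hx0
      (flatMap_inj f xstar hf (fun i => hd i _ hx0) (fun k => hed k _ hx0) hjac' k
        ((hT.contDiffAt (hN0.mem_nhds hx0)).differentiableAt htop))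
  choose G hGs hGl using hG
  -- `P k` freezes the slots after `k` at the operating point
  let P : Fin (r + 1) → (Fin (r + 1) → (Fin m → ℝ)) → (Fin (r + 1) → (Fin m → ℝ)) :=
    fun k p j => if (j : ℕ) ≤ (k : ℕ) then p j else xstar j
  have hPs : ∀ k, ContDiff ℝ (⊤ : ℕ∞) (P k) := by
    intro k
    refine contDiff_pi.2 fun j => ?_
    by_cases hj : (j : ℕ) ≤ (k : ℕ)
    · simpa only [P, if_pos hj] using contDiff_apply ℝ (Fin m → ℝ) j
    · simpa only [P, if_neg hj] using contDiff_const
  have hPx : ∀ k, P k xstar = xstar := fun k => by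
    funext j
    simp [P]
  have hev : ∀ᶠ p in 𝓝 xstar, p ∈ N0 ∧ ∀ k, G k (flatMap f k (P k p)) = P k p := by
    refine (hN0.eventually_mem hx0).and (eventually_all.2 fun k => ?_)
    have hc : Tendsto (P k) (𝓝 xstar) (𝓝 xstar) := by
      have := (hPs k).continuous.continuousAt (x := xstar)
      rwa [ContinuousAt, hPx k] at this
    exact hc.eventually (hGl k)
  obtain ⟨N, hN, hNo, hxN⟩ := eventually_nhds_iff.1 hev
  refine ⟨N, hNo, hxN, fun k z => G k (P k z) k, fun k => ?_, fun k p q h => ?_, ?_⟩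
  · exact contDiff_pi.1 ((hGs k).comp (hPs k)) k
  · have hPpq : P k p = P k q := by
      funext j
      by_cases hj : (j : ℕ) ≤ (k : ℕ)
      · simp only [P, if_pos hj, h j hj]
      · simp only [P, if_neg hj]
    simp only [hPpq]
  · intro J hJ _ x u y hy0 hy _ hx hXN t ht
    have htraj := lieOut_traj hr f hf J hJ x u y hy0 hy hx
      (fun t ht k => hed k _ (hN _ (hXN t ht)).1)
    set X : Fin (r + 1) → (Fin m → ℝ) := Fin.snoc (fun i' => x i' t) (u t) with hX
    have hmain : ∀ k : Fin (r + 1), X k = G k (P k fun j : Fin (r + 1) => y (j : ℕ) t) k := by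
      intro k
      have hPk : (P k fun j : Fin (r + 1) => y (j : ℕ) t) = flatMap f k (P k X) := by
        funext j
        by_cases hj : (j : ℕ) ≤ (k : ℕ)
        · simp only [P, flatMap, if_pos hj]
          rw [htraj j (by omega) t ht]
          refine lieOut_dep f hf j _ _ fun j' hj' => ?_
          rw [if_pos (hj'.trans hj)]
        · simp only [P, flatMap, if_neg hj]
      rw [hPk, (hN X (hXN t ht)).2 k]
      simp [P]
    refine ⟨fun k => ?_, ?_⟩
    · refine Eq.trans ?_ (hmain k.castSucc)
      rw [hX, Fin.snoc_castSucc]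
    · refine Eq.trans ?_ (hmain (Fin.last r))
      rw [hX, Fin.snoc_last]
end

section
/- (Theorem 2, flatness-preserving residuals.) Suppose each f̄_i : (ℝ^m)^{i+1} → ℝ^m is C^∞ on a neighborhood of (x*, u*) with D_{x_{i+1}} f̄_i(x*_1, …, x*_{i+1}) invertible (x_{r+1} := u), and let Δ̂ = (Δ̂_1, …, Δ̂_r) be a lower-triangular residual with each Δ̂_i : (ℝ^m)^i → ℝ^m C^∞. Then there exist an open neighborhood N of (x*, u*) and C^∞ maps Φ̂_k : (ℝ^m)^k → ℝ^m for k = 1, …, r and Ψ̂ : (ℝ^m)^{r+1} → ℝ^m such that: for every open interval J and curves x_i : J → ℝ^m (each differentiable, x_1 r-times differentiable) and continuous u : J → ℝ^m satisfying the augmented dynamics ẋ_i(t) = f̄_i(x_1(t), …, x_{i+1}(t)) + Δ̂_i(x_1(t), …, x_i(t)) for i < r, ẋ_r(t) = f̄_r(x_1(t), …, x_r(t), u(t)) + Δ̂_r(x_1(t), …, x_r(t)), and (x(t), u(t)) ∈ N for all t ∈ J, one has, writing y := x_1, x_k(t) = Φ̂_k(y(t), …, y^{(k−1)}(t)) for k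 = 1, …, r and u(t) = Ψ̂(y(t), …, y^{(r)}(t)) for all t ∈ J. In particular the augmented system f̄ + Δ̂ is locally differentially flat around (x*, u*) with the same flat output y = x_1 as the nominal system. -/
/-!
Write `F i = f i + Δ i`. Since `Δ i` does not involve slot `i + 1`, the partial Jacobian of `F i`
in slot `i + 1` at `xstar` is that of `f i`, hence invertible, and only the sum `F i` matters.

The inverse function theorem, applied to the map replacing slot `i + 1` of `x` by `F i x`, solves
`v = F i x` for slot `i + 1` of `x` near `xstar`. After multiplication by a bump function the
solution becomes a globally smooth map `G i`, with `x (i + 1) = G i (x, F i x)` for all `x` near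
`xstar`, where `G i` sees only the slots `≤ i` of its first argument (`exists_stage_solver`). The
neighbourhood `N` is the intersection of the finitely many neighbourhoods so obtained.

Along a trajectory in `N` the value `F i x` is the derivative of `x i`. If the slots `≤ k` are
already `Ξ (y, …, y^{(k)})` with `Ξ` smooth, then the derivative of slot `k` is a smooth function
of `(y, …, y^{(k+1)})` by the chain rule, and `G k` yields slot `k + 1`
(`exists_recovery_map`). All maps in this recursion are globally defined and smooth, so no
further shrinking of `N` is required.
-/

open scoped ContDiff Topology

/-! ### Globally smooth local inverses -/

section LocalInverse

variable {E F : Type*} [NormedAddCommGroup E] [NormedSpace ℝ E] [FiniteDimensional ℝ E]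
  [NormedAddCommGroup F] [NormedSpace ℝ F]

/-- A germ of a smooth map extends to a globally smooth map. The hypothesis asks for smoothness on
a neighbourhood because `ContDiffAt ℝ ∞` at a single point does not provide one. -/
lemma exists_contDiff_eventuallyEq {g : E → F} {b : E}
    (hg : ∀ᶠ z in 𝓝 b, ContDiffAt ℝ ∞ g z) :
    ∃ g' : E → F, ContDiff ℝ ∞ g' ∧ g' =ᶠ[𝓝 b] g := by
  obtain ⟨ε, hε, hball⟩ := Metric.eventually_nhds_iff_ball.1 hg
  let φ : ContDiffBump b := ⟨ε / 4, ε / 2, by linarith, by linarith⟩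
  refine ⟨fun z => φ z • g z, ?_, ?_⟩
  · rw [contDiff_iff_contDiffAt]
    intro z
    by_cases hz : z ∈ Metric.ball b ε
    · exact φ.contDiffAt.smul (hball z hz)
    · have hz' : z ∉ tsupport φ := by
        rw [φ.tsupport_eq]
        intro h
        apply hz
        rw [Metric.mem_closedBall] at h
        rw [Metric.mem_ball]
        have : φ.rOut = ε / 2 := rfl
        linarith
      have h0 : (fun z => φ z • g z) =ᶠ[𝓝 z] fun _ => 0 := by
        filter_upwards [notMem_tsupport_iff_eventuallyEq.1 hz'] with w hw
        simp [hw]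
      exact contDiffAt_const.congr_of_eventuallyEq h0
  · filter_upwards [φ.eventuallyEq_one] with w hw
    simp [hw]

/-- Smooth inverse function theorem with a globally smooth left inverse. -/
lemma exists_smooth_local_left_inverse {T : E → E} {U : Set E} {a : E} (hU : IsOpen U)
    (ha : a ∈ U) (hT : ContDiffOn ℝ ∞ T U) (hinj : Function.Injective (fderiv ℝ T a)) :
    ∃ g : E → E, ContDiff ℝ ∞ g ∧ ∀ᶠ x in 𝓝 a, g (T x) = x := by
  have : CompleteSpace E := FiniteDimensional.complete ℝ E
  have hTat : ∀ x ∈ U, ContDiffAt ℝ ∞ T x := fun x hx => hT.contDiffAt (hU.mem_nhds hx)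
  let e : E ≃L[ℝ] E :=
    (LinearEquiv.ofInjectiveEndo (fderiv ℝ T a : E →ₗ[ℝ] E) hinj).toContinuousLinearEquiv
  have he : (e : E →L[ℝ] E) = fderiv ℝ T a := by
    ext v
    rfl
  have hda : HasFDerivAt T (e : E →L[ℝ] E) a := by
    rw [he]
    exact ((hTat a ha).differentiableAt (by simp)).hasFDerivAt
  let P := (hTat a ha).toOpenPartialHomeomorph T hda (by simp)
  have haP : a ∈ P.source := (hTat a ha).mem_toOpenPartialHomeomorph_source hda (by simp)
  have hPT : ∀ x, P x = T x := fun x => rfl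
  have hgood : ∀ᶠ x in 𝓝 a,
      x ∈ U ∧ fderiv ℝ T x ∈ Set.range ((↑) : (E ≃L[ℝ] E) → E →L[ℝ] E) := by
    refine (hU.eventually_mem ha).and ?_
    have hc : ContinuousAt (fderiv ℝ T) a :=
      (hT.continuousOn_fderiv_of_isOpen hU (by simp)).continuousAt (hU.mem_nhds ha)
    refine hc.eventually ?_
    rw [← he]
    exact e.nhds
  have hsymm : ∀ᶠ z in 𝓝 (T a), ContDiffAt ℝ ∞ P.symm z := by
    have hc : Filter.Tendsto P.symm (𝓝 (T a)) (𝓝 a) := by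
      have := P.symm.continuousAt (x := P a) (P.map_source haP)
      rw [ContinuousAt, P.left_inv haP] at this
      exact this
    filter_upwards [hc.eventually hgood, P.open_target.eventually_mem (P.map_source haP)]
      with z hz hzt
    obtain ⟨hzU, e', he'⟩ := hz
    refine P.contDiffAt_symm (f₀' := e') hzt ?_ (hTat _ hzU)
    rw [he']
    exact ((hTat _ hzU).differentiableAt (by simp)).hasFDerivAt
  obtain ⟨g, hg, hgeq⟩ := exists_contDiff_eventuallyEq hsymm
  refine ⟨g, hg, ?_⟩
  filter_upwards [(hTat a ha).continuousAt.eventually hgeq, P.open_source.eventually_mem haP]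
    with x hx hxP
  rw [hx, ← hPT, P.left_inv hxP]

end LocalInverse

/-! ### Solving a stage and recovering the trajectory -/

section Recovery

variable {V : Type*} [NormedAddCommGroup V] [NormedSpace ℝ V] {r : ℕ}

/-- Solving stage `i` for its virtual input: near `xstar`, slot `i + 1` of `x` is a globally
defined smooth function of the slots `≤ i` of `x` and of the value `F x`. -/
lemma exists_stage_solver [FiniteDimensional ℝ V] (i : Fin r) {F : (Fin (r + 1) → V) → V}
    {xstar : Fin (r + 1) → V}
    (hdep : ∀ p q : Fin (r + 1) → V,
      (∀ j : Fin (r + 1), (j : ℕ) ≤ (i : ℕ) + 1 → p j = q j) → F p = F q)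
    {N0 : Set (Fin (r + 1) → V)} (hN0 : IsOpen N0) (hx0 : xstar ∈ N0)
    (hF : ContDiffOn ℝ ∞ F N0)
    (hinj : Function.Injective
      (fderiv ℝ (fun v => F (Function.update xstar i.succ v)) (xstar i.succ))) :
    ∃ G : (Fin (r + 1) → V) × V → V, ContDiff ℝ ∞ G ∧
      (∀ p q : Fin (r + 1) → V, ∀ v,
        (∀ j : Fin (r + 1), (j : ℕ) ≤ (i : ℕ) → p j = q j) → G (p, v) = G (q, v)) ∧
      ∀ᶠ x in 𝓝 xstar, x i.succ = G (x, F x) := by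
  let T : (Fin (r + 1) → V) → (Fin (r + 1) → V) := fun x => Function.update x i.succ (F x)
  have hT : ContDiffOn ℝ ∞ T N0 := by
    rw [contDiffOn_pi]
    intro j
    by_cases hj : j = i.succ
    · subst hj
      simpa [T] using hF
    · simpa [T, hj] using (contDiff_apply ℝ V j).contDiffOn
  have hFd : DifferentiableAt ℝ F xstar :=
    (hF.contDiffAt (hN0.mem_nhds hx0)).differentiableAt (by simp)
  have hTd : DifferentiableAt ℝ T xstar :=
    (hT.contDiffAt (hN0.mem_nhds hx0)).differentiableAt (by simp)
  have hpartial : ∀ w : V, fderiv ℝ (fun v => F (Function.update xstar i.succ v))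
      (xstar i.succ) w = fderiv ℝ F xstar (Pi.single i.succ w) := by
    intro w
    have h1 := hasFDerivAt_update (𝕜 := ℝ) xstar (i := i.succ) (xstar i.succ)
    have h2 : HasFDerivAt F (fderiv ℝ F xstar)
        (Function.update xstar i.succ (xstar i.succ)) := by
      rw [Function.update_eq_self]
      exact hFd.hasFDerivAt
    have h3 := (h2.comp (xstar i.succ) h1).fderiv
    rw [Function.comp_def] at h3
    rw [h3]
    simp only [ContinuousLinearMap.comp_apply]
    congr 1
    ext j
    by_cases hj : j = i.succ
    · subst hj
      simp
    · simp [hj]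
  have hTcomp : ∀ (v : Fin (r + 1) → V) (j : Fin (r + 1)),
      fderiv ℝ T xstar v j = fderiv ℝ (fun x => T x j) xstar v := by
    intro v j
    rw [(hasFDerivAt_pi'.1 hTd.hasFDerivAt j).fderiv]
    rfl
  have hTinj : Function.Injective (fderiv ℝ T xstar) := by
    rw [injective_iff_map_eq_zero]
    intro v hv
    have hoff : ∀ j, j ≠ i.succ → v j = 0 := by
      intro j hj
      have h := hTcomp v j
      rw [hv] at h
      have hfun : (fun x => T x j) = fun x : Fin (r + 1) → V => x j := by
        funext x
        simp [T, hj]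
      rw [hfun, (hasFDerivAt_apply j xstar).fderiv] at h
      simpa using h.symm
    have hsingle : v = Pi.single i.succ (v i.succ) := by
      ext j
      by_cases hj : j = i.succ
      · subst hj
        simp
      · simp [hj, hoff j hj]
    have hon := hTcomp v i.succ
    have hfun : (fun x => T x i.succ) = F := by
      funext x
      simp [T]
    rw [hv, hfun, hsingle, ← hpartial] at hon
    have hz : v i.succ = 0 := (injective_iff_map_eq_zero _).1 hinj _ hon.symm
    rw [hsingle, hz, Pi.single_zero]
  obtain ⟨g, hg, hgT⟩ := exists_smooth_local_left_inverse hN0 hx0 hT hTinj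
  -- The slots beyond `i + 1` are frozen at `xstar`, so that only slots `≤ i` enter.
  let A : (Fin (r + 1) → V) × V → (Fin (r + 1) → V) := fun z j =>
    if (j : ℕ) ≤ i then z.1 j else if j = i.succ then z.2 else xstar j
  have hA : ContDiff ℝ ∞ A := by
    rw [contDiff_pi]
    intro j
    by_cases h1 : (j : ℕ) ≤ i
    · simp only [A, h1, if_true]
      fun_prop
    · by_cases h2 : j = i.succ
      · subst h2
        simp only [A, h1, if_true, if_false]
        fun_prop
      · simp only [A, h1, h2, if_false]
        fun_prop
  refine ⟨fun z => g (A z) i.succ, ?_, ?_, ?_⟩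
  · exact (contDiff_apply ℝ V i.succ).comp (hg.comp hA)
  · intro p q v hpq
    have : A (p, v) = A (q, v) := by
      funext j
      by_cases h1 : (j : ℕ) ≤ i
      · simp [A, h1, hpq j h1]
      · simp [A, h1]
    simp only [this]
  · let Q : (Fin (r + 1) → V) → (Fin (r + 1) → V) := fun x => A (x, x i.succ)
    have hQc : Filter.Tendsto Q (𝓝 xstar) (𝓝 xstar) := by
      have hc : Continuous Q := hA.continuous.comp (by fun_prop)
      have hQx : Q xstar = xstar := by
        funext j
        by_cases h1 : (j : ℕ) ≤ i
        · simp [Q, A, h1]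
        · by_cases h2 : j = i.succ
          · subst h2
            simp [Q, A]
          · simp [Q, A, h1, h2]
      simpa [hQx] using hc.tendsto xstar
    filter_upwards [hQc.eventually hgT] with x hx
    have hQx : ∀ j : Fin (r + 1), (j : ℕ) ≤ (i : ℕ) + 1 → Q x j = x j := by
      intro j hj
      by_cases h1 : (j : ℕ) ≤ i
      · simp [Q, A, h1]
      · have h2 : j = i.succ := Fin.ext (by simp; omega)
        subst h2
        simp [Q, A]
    have hTQ : T (Q x) = A (x, F x) := by
      funext j
      by_cases h2 : j = i.succ
      · subst h2
        simp [T, A, hdep (Q x) x hQx]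
      · simp [T, Q, A, h2]
    show x i.succ = g (A (x, F x)) i.succ
    rw [← hTQ, hx, hQx i.succ (by simp)]

/-- Truncation of a jet `(y, …, y^{(r)})` to the slots `≤ k`, the others being set to zero. -/
def truncJet (k : ℕ) (p : Fin (r + 1) → V) : Fin (r + 1) → V :=
  fun j => if (j : ℕ) ≤ k then p j else 0

/-- The velocity of `truncJet k p` along a curve: slot `j ≤ k` holds slot `j + 1` of `p`. The
`r`-th slot has no successor and is given the value zero; it is only reached when `k ≥ r`. -/
def shiftJet (k : ℕ) (p : Fin (r + 1) → V) : Fin (r + 1) → V :=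
  fun j => if h : (j : ℕ) ≤ k ∧ (j : ℕ) + 1 < r + 1 then p ⟨(j : ℕ) + 1, h.2⟩ else 0

lemma contDiff_truncJet (k : ℕ) :
    ContDiff ℝ ∞ (truncJet k : (Fin (r + 1) → V) → (Fin (r + 1) → V)) := by
  rw [contDiff_pi]
  intro j
  by_cases h : (j : ℕ) ≤ k
  · simp only [truncJet, h, if_true]
    fun_prop
  · simp only [truncJet, h, if_false]
    fun_prop

lemma contDiff_shiftJet (k : ℕ) :
    ContDiff ℝ ∞ (shiftJet k : (Fin (r + 1) → V) → (Fin (r + 1) → V)) := by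
  rw [contDiff_pi]
  intro j
  by_cases h : (j : ℕ) ≤ k ∧ (j : ℕ) + 1 < r + 1
  · simp only [shiftJet, h, and_self, dite_true]
    fun_prop
  · simp only [shiftJet, h, dite_false]
    fun_prop

/-- Recursive recovery of the slots `≤ k` of the state-input tuple `X` from the jet of its slot
`0`, by a smooth map `Ξ` that does not depend on the trajectory. Trajectories are given by their
tuple `X`, whose last slot (the input) is not differentiated. -/
lemma exists_recovery_map {F : Fin r → (Fin (r + 1) → V) → V}
    {G : Fin r → (Fin (r + 1) → V) × V → V} (hG : ∀ i, ContDiff ℝ ∞ (G i))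
    (hGdep : ∀ i : Fin r, ∀ p q : Fin (r + 1) → V, ∀ v,
      (∀ j : Fin (r + 1), (j : ℕ) ≤ (i : ℕ) → p j = q j) → G i (p, v) = G i (q, v))
    {N : Set (Fin (r + 1) → V)} (hN : ∀ x ∈ N, ∀ i : Fin r, x i.succ = G i (x, F i x))
    (k : ℕ) (hk : k ≤ r) :
    ∃ Ξ : (Fin (r + 1) → V) → (Fin (r + 1) → V), ContDiff ℝ ∞ Ξ ∧
      (∀ p q : Fin (r + 1) → V,
        (∀ j : Fin (r + 1), (j : ℕ) ≤ k → p j = q j) → Ξ p = Ξ q) ∧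
      ∀ J : Set ℝ, IsOpen J → ∀ (X : ℝ → Fin (r + 1) → V) (y : ℕ → ℝ → V),
        (∀ t ∈ J, X t 0 = y 0 t) →
        (∀ j : ℕ, j < r → ∀ t ∈ J, HasDerivAt (y j) (y (j + 1) t) t) →
        (∀ t ∈ J, ∀ i : Fin r, HasDerivAt (fun s => X s i.castSucc) (F i (X t)) t) →
        (∀ t ∈ J, X t ∈ N) →
        ∀ t ∈ J, ∀ j : Fin (r + 1), (j : ℕ) ≤ k →
          X t j = Ξ (fun l : Fin (r + 1) => y (l : ℕ) t) j := by
  induction k with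
  | zero =>
    refine ⟨fun p _ => p 0, by fun_prop, ?_, ?_⟩
    · intro p q h
      funext j
      exact h 0 le_rfl
    · intro J _ X y h0 _ _ _ t ht j hj
      have : j = 0 := Fin.ext (by simpa using hj)
      subst this
      simpa using h0 t ht
  | succ k ih =>
    obtain ⟨Ξ, hΞ, hΞdep, hrec⟩ := ih (by omega)
    let i : Fin r := ⟨k, hk⟩
    -- `D p` is the velocity of slot `k`, expressed through the jet `p` by the chain rule.
    let D : (Fin (r + 1) → V) → V := fun p =>
      fderiv ℝ Ξ (truncJet k p) (shiftJet k p) i.castSucc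
    let Ξ' : (Fin (r + 1) → V) → (Fin (r + 1) → V) := fun p =>
      Function.update (Ξ (truncJet k p)) i.succ (G i (Ξ (truncJet k p), D p))
    have hD : ContDiff ℝ ∞ D := by
      have h1 : ContDiff ℝ ∞ (fun p : Fin (r + 1) → V => fderiv ℝ Ξ (truncJet k p)) :=
        (hΞ.fderiv_right (m := ∞) (by simp)).comp (contDiff_truncJet k)
      exact (contDiff_apply ℝ V i.castSucc).comp (h1.clm_apply (contDiff_shiftJet k))
    have hΞt : ContDiff ℝ ∞ (fun p : Fin (r + 1) → V => Ξ (truncJet k p)) :=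
      hΞ.comp (contDiff_truncJet k)
    have htr : ∀ p : Fin (r + 1) → V, Ξ p = Ξ (truncJet k p) := fun p =>
      hΞdep _ _ fun j hj => by simp [truncJet, hj]
    refine ⟨Ξ', ?_, ?_, ?_⟩
    · rw [contDiff_pi]
      intro j
      by_cases hj : j = i.succ
      · subst hj
        simpa [Ξ', Function.comp_def] using (hG i).comp (hΞt.prodMk hD)
      · simpa [Ξ', hj, Function.comp_def] using (contDiff_apply ℝ V j).comp hΞt
    · intro p q hpq
      have h1 : truncJet k p = truncJet k q := by
        funext j
        by_cases hj : (j : ℕ) ≤ k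
        · simp [truncJet, hj, hpq j (by omega)]
        · simp [truncJet, hj]
      have h2 : shiftJet k p = shiftJet k q := by
        funext j
        by_cases hj : (j : ℕ) ≤ k ∧ (j : ℕ) + 1 < r + 1
        · simp only [shiftJet, hj, and_self, dite_true]
          exact hpq _ (by simpa using hj.1)
        · simp only [shiftJet, hj, dite_false]
      simp only [Ξ', D, h1, h2]
    · intro J hJ X y h0 hy hX hXN t ht j hj
      have hrec' := hrec J hJ X y h0 hy hX hXN
      let Y : ℝ → Fin (r + 1) → V := fun s l => y (l : ℕ) s
      by_cases hjk : j = i.succ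
      · subst hjk
        have hYd : HasDerivAt (fun s => truncJet k (Y s)) (shiftJet k (Y t)) t := by
          rw [hasDerivAt_pi]
          intro l
          by_cases hl : (l : ℕ) ≤ k
          · have hl' : (l : ℕ) ≤ k ∧ (l : ℕ) + 1 < r + 1 := ⟨hl, by omega⟩
            simp only [truncJet, shiftJet, hl, hl', and_self, if_true, dite_true]
            exact hy l (by omega) t ht
          · simp only [truncJet, shiftJet, hl, false_and, if_false, dite_false]
            exact hasDerivAt_const t 0
        have hΞd : HasDerivAt (fun s => Ξ (truncJet k (Y s)) i.castSucc) (D (Y t)) t := by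
          have h := ((hΞ.differentiable (by simp)) (truncJet k (Y t))).hasFDerivAt.comp_hasDerivAt
            t hYd
          exact hasDerivAt_pi.1 h i.castSucc
        have hev : (fun s => X s i.castSucc) =ᶠ[𝓝 t]
            fun s => Ξ (truncJet k (Y s)) i.castSucc := by
          filter_upwards [hJ.eventually_mem ht] with s hs
          rw [← htr]
          exact hrec' s hs i.castSucc le_rfl
        have hval : F i (X t) = D (Y t) :=
          (hX t ht i).unique (hΞd.congr_of_eventuallyEq hev)
        have hstate : G i (X t, F i (X t)) = G i (Ξ (truncJet k (Y t)), F i (X t)) := by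
          apply hGdep
          intro l hl
          rw [← htr]
          exact hrec' t ht l hl
        rw [hN _ (hXN t ht) i, hstate, hval]
        simp [Ξ', Y]
      · have hj' : (j : ℕ) ≤ k := by
          have : (j : ℕ) ≠ k + 1 := fun h => hjk (Fin.ext (by simpa [i] using h))
          omega
        simp only [Ξ', Function.update_of_ne hjk]
        rw [← htr]
        exact hrec' t ht j hj'

end Recovery

/-! ### Flatness of the augmented system -/

/-!
Statement 3 (Theorem 2 of the paper): a lower-triangular residual preserves
local differential flatness of a regular pure-feedback system, with the same
flat output `y = x_1`.

Encoding: the full state-input tuple is `Fin.snoc (fun i => x i t) (u t) :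
Fin (r+1) → (Fin m → ℝ)` (sub-state `x_i` at 0-indexed slot `i - 1`, the input
`u = x_{r+1}` at slot `r`).  The stage map `f̄_i` (1-indexed `i = i0 + 1` for
`i0 : Fin r`) depends only on slots `j ≤ i0 + 1`; the residual component `Δ̂_i`
depends only on `x_1, …, x_i`, i.e. on slots `j ≤ i0`.  The flatness maps of
the augmented system are encoded as `Φ : Fin (r+1) → _`, where `Φ k0`
represents `Φ̂_{k0+1}`, a function of `(y, ẏ, …, y^{(k0)})`, and `Ψ̂ = Φ r`.
Higher derivatives of `y = x_1` are encoded by a chain `y : ℕ → ℝ → (Fin m → ℝ)`.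
-/
theorem stmt3
    (m r : ℕ) (hm : 1 ≤ m) (hr : 1 ≤ r)
    (f Δ : Fin r → ((Fin (r + 1) → (Fin m → ℝ)) → (Fin m → ℝ)))
    (xstar : Fin (r + 1) → (Fin m → ℝ))
    -- `f̄_i` depends only on `x_1, …, x_{i+1}` (pure-feedback form)
    (hfdep : ∀ i : Fin r, ∀ p q : Fin (r + 1) → (Fin m → ℝ),
      (∀ j : Fin (r + 1), (j : ℕ) ≤ (i : ℕ) + 1 → p j = q j) → f i p = f i q)
    -- `f̄_i` is `C^∞` on a neighborhood `N0` of the operating point `(x*, u*)`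
    (N0 : Set (Fin (r + 1) → (Fin m → ℝ))) (hN0 : IsOpen N0) (hx0 : xstar ∈ N0)
    (hsmooth : ∀ i : Fin r, ContDiffOn ℝ (⊤ : ℕ∞) (f i) N0)
    -- invertible partial Jacobians `D_{x_{i+1}} f̄_i` at the operating point
    (hjac : ∀ i : Fin r,
      Function.Bijective
        (fderiv ℝ (fun v => f i (Function.update xstar i.succ v)) (xstar i.succ)))
    -- the residual is lower-triangular: `Δ̂_i` depends only on `x_1, …, x_i`
    (hΔdep : ∀ i : Fin r, ∀ p q : Fin (r + 1) → (Fin m → ℝ),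
      (∀ j : Fin (r + 1), (j : ℕ) ≤ (i : ℕ) → p j = q j) → Δ i p = Δ i q)
    -- each `Δ̂_i` is `C^∞`
    (hΔsmooth : ∀ i : Fin r, ContDiff ℝ (⊤ : ℕ∞) (Δ i)) :
    ∃ N : Set (Fin (r + 1) → (Fin m → ℝ)), IsOpen N ∧ xstar ∈ N ∧
      ∃ Φ : Fin (r + 1) → ((Fin (r + 1) → (Fin m → ℝ)) → (Fin m → ℝ)),
        -- the maps `Φ̂_1, …, Φ̂_r` and `Ψ̂ = Φ̂_{r+1}` are `C^∞`
        (∀ k : Fin (r + 1), ContDiff ℝ (⊤ : ℕ∞) (Φ k)) ∧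
        -- `Φ̂_{k0+1}` is a function of `(y, ẏ, …, y^{(k0)})` only
        (∀ k : Fin (r + 1), ∀ p q : Fin (r + 1) → (Fin m → ℝ),
          (∀ j : Fin (r + 1), (j : ℕ) ≤ (k : ℕ) → p j = q j) → Φ k p = Φ k q) ∧
        -- for every open interval `J` and trajectory of the augmented system staying in `N`:
        ∀ (J : Set ℝ), IsOpen J → J.OrdConnected →
        ∀ (x : Fin r → ℝ → (Fin m → ℝ)) (u : ℝ → (Fin m → ℝ))
          (y : ℕ → ℝ → (Fin m → ℝ)),
          -- `y = x_1` together with its higher derivatives on `J`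
          y 0 = x ⟨0, hr⟩ →
          (∀ j : ℕ, j < r → ∀ t ∈ J, HasDerivAt (y j) (y (j + 1) t) t) →
          -- `u` is continuous on `J`
          ContinuousOn u J →
          -- the curves satisfy the augmented dynamics `ẋ_i = f̄_i + Δ̂_i` on `J`
          (∀ t ∈ J, ∀ i : Fin r,
            HasDerivAt (x i)
              (f i (Fin.snoc (fun i' => x i' t) (u t))
                + Δ i (Fin.snoc (fun i' => x i' t) (u t))) t) →
          -- the trajectory remains in `N`
          (∀ t ∈ J, Fin.snoc (fun i' => x i' t) (u t) ∈ N) →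
          -- conclusion: states and input are recovered from the flat output `y = x_1`
          ∀ t ∈ J,
            (∀ k : Fin r, x k t = Φ k.castSucc (fun j : Fin (r + 1) => y (j : ℕ) t)) ∧
            u t = Φ (Fin.last r) (fun j : Fin (r + 1) => y (j : ℕ) t) := by
  have hstage : ∀ i : Fin r, ∃ G : (Fin (r + 1) → (Fin m → ℝ)) × (Fin m → ℝ) → (Fin m → ℝ),
      ContDiff ℝ ∞ G ∧
      (∀ p q : Fin (r + 1) → (Fin m → ℝ), ∀ v,
        (∀ j : Fin (r + 1), (j : ℕ) ≤ (i : ℕ) → p j = q j) → G (p, v) = G (q, v)) ∧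
      ∀ᶠ x in 𝓝 xstar, x i.succ = G (x, f i x + Δ i x) := by
    intro i
    refine exists_stage_solver i (F := fun x => f i x + Δ i x) ?_ hN0 hx0
      ((hsmooth i).add (hΔsmooth i).contDiffOn) ?_
    · intro p q h
      rw [hfdep i p q h, hΔdep i p q fun j hj => h j (by omega)]
    · -- `Δ i` is constant in slot `i + 1`, so it does not change the partial Jacobian.
      have hconst : ∀ v, Δ i (Function.update xstar i.succ v) = Δ i xstar := fun v =>
        hΔdep i _ _ fun j hj => by
          have : j ≠ i.succ := by
            rintro rfl
            simp at hj
          simp [this]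
      simp only [hconst, fderiv_add_const]
      exact (hjac i).injective
  choose G hG hGdep hGev using hstage
  obtain ⟨N, hNsub, hNopen, hxN⟩ := eventually_nhds_iff.1 (Filter.eventually_all.2 hGev)
  choose Ξ hΞ hΞdep hΞrec using fun k : Fin (r + 1) =>
    exists_recovery_map (F := fun i x => f i x + Δ i x) hG hGdep hNsub k (Nat.le_of_lt_succ k.2)
  refine ⟨N, hNopen, hxN, fun k p => Ξ k p k, ?_, ?_, ?_⟩
  · intro k
    exact (contDiff_apply ℝ (Fin m → ℝ) k).comp (hΞ k)
  · intro k p q h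
    simp only [hΞdep k p q h]
  · intro J hJ _ x u y hy0 hy _ hx hN t ht
    let X : ℝ → Fin (r + 1) → (Fin m → ℝ) := fun s => Fin.snoc (fun i' => x i' s) (u s)
    have hXc : ∀ (s : ℝ) (i : Fin r), X s i.castSucc = x i s := fun s i => by simp [X]
    have hX0 : ∀ s ∈ J, X s 0 = y 0 s := by
      intro s _
      rw [hy0]
      exact hXc s ⟨0, hr⟩
    have hXd : ∀ s ∈ J, ∀ i : Fin r,
        HasDerivAt (fun s' => X s' i.castSucc) (f i (X s) + Δ i (X s)) s := by
      intro s hs i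
      simp only [hXc]
      exact hx s hs i
    have key : ∀ k : Fin (r + 1), X t k = Ξ k (fun l : Fin (r + 1) => y (l : ℕ) t) k :=
      fun k => hΞrec k J hJ X y hX0 hy hXd hN t ht k le_rfl
    refine ⟨fun k => ?_, ?_⟩
    · exact (hXc t k).symm.trans (key k.castSucc)
    · rw [← show X t (Fin.last r) = u t by simp [X]]
      exact key (Fin.last r)
end

section
/- (Theorem 3, construction of the flatness diffeomorphism of the augmented system.) Let N be an open neighborhood of (x*, u*) and suppose C^∞ maps h_k : (ℝ^m)^{k+1} → ℝ^m, k = 1, …, r, satisfy h_k(x_1, …, x_k, f̄_k(x_1, …, x_{k+1})) = x_{k+1} for all (x, u) ∈ N (with x_{r+1} := u), and let Δ̂ = (Δ̂_1, …, Δ̂_r) be a lower-triangular residual with each Δ̂_i C^∞. Define maps Φ̂_k recursively by Φ̂_1(y) := y and, for k = 2, …, r+1, Φ̂_k(y, ẏ, …, y^{(k−1)}) := h_{k−1}( Φ̂_1, …, Φ̂_{k−1}, DΦ̂_{k−1}·(ẏ, …, y^{(k−1)}) − Δ̂_{k−1}(Φ̂_1, …, Φ̂_{k−1}) ), where DΦ̂_{k−1}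 is the total Jacobian of Φ̂_{k−1} in its arguments (y, …, y^{(k−2)}) and each Φ̂_j on the right is evaluated at (y, …, y^{(j−1)}). Then each Φ̂_k is C^∞ where defined, and for every open interval J and curves x_i : J → ℝ^m (each differentiable, x_1 r-times differentiable) and continuous u : J → ℝ^m satisfying the augmented dynamics ẋ_i(t) = f̄_i(x_1(t), …, x_{i+1}(t)) + Δ̂_i(x_1(t), …, x_i(t)) with (x(t), u(t)) ∈ N for all t ∈ J, one has, writing y := x_1, x_k(t) = Φ̂_k(y(t), …, y^{(k−1)}(t)) for k = 1, …, r and u(t) = Φ̂_{r+1}(y(t), …, y^{(r)}(t)) for all t ∈ J. -/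
/-!
Each `Φ̂_k` is smooth and depends only on the entries `y, …, y^{(k-1)}`; both facts follow together
by strong induction on `k` (`flatMap_smooth_dep`), since `h_{k-1}` and `Δ̂_{k-1}` only see
`Φ̂_1, …, Φ̂_{k-1}` and the directional derivative of `Φ̂_{k-1}` along the shifted jet.

Along a trajectory, suppose `x_j = Φ̂_j(y, …, y^{(j-1)})` on `J` for all `j ≤ k`. The chain rule gives
`ẋ_k = DΦ̂_k · (ẏ, …, y^{(k)})`, so the dynamics yield
`f̄_k(x_1, …, x_{k+1}) = DΦ̂_k · (ẏ, …, y^{(k)}) - Δ̂_k(x_1, …, x_k)`, and applying `h_k` produces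
`x_{k+1} = Φ̂_{k+1}`. The top derivative `y^{(r)}` need not be differentiable; as `Φ̂_k` with `k ≤ r`
ignores it, the chain rule is applied to the jet with its last entry frozen, whose velocity is
exactly the shifted jet padded by `0`.
-/

/-- The directional derivative of a map depending only on the entries `≤ k` depends only on the
entries `≤ k` of the base point and of the direction. -/
lemma fderiv_congr_of_dep {m n k : ℕ} {g : (Fin n → (Fin m → ℝ)) → (Fin m → ℝ)}
    (hg : Differentiable ℝ g)
    (hdep : ∀ p q : Fin n → (Fin m → ℝ), (∀ j : Fin n, (j : ℕ) ≤ k → p j = q j) → g p = g q)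
    {Y Z v w : Fin n → (Fin m → ℝ)} (hYZ : ∀ j : Fin n, (j : ℕ) ≤ k → Y j = Z j)
    (hvw : ∀ j : Fin n, (j : ℕ) ≤ k → v j = w j) :
    fderiv ℝ g Y v = fderiv ℝ g Z w := by
  -- `g = g ∘ P` with `P` the linear projection killing the entries of index `> k`.
  let P : (Fin n → (Fin m → ℝ)) →L[ℝ] (Fin n → (Fin m → ℝ)) :=
    ContinuousLinearMap.pi fun j =>
      if (j : ℕ) ≤ k then ContinuousLinearMap.proj (R := ℝ) (φ := fun _ : Fin n => Fin m → ℝ) j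
      else 0
  have hP : ∀ p : Fin n → (Fin m → ℝ), ∀ j, P p j = if (j : ℕ) ≤ k then p j else 0 := by
    intro p j
    simp only [P, ContinuousLinearMap.pi_apply]
    split_ifs <;> rfl
  have hPcongr : ∀ p q : Fin n → (Fin m → ℝ), (∀ j : Fin n, (j : ℕ) ≤ k → p j = q j) →
      P p = P q := by
    intro p q hpq
    funext j
    rw [hP, hP]
    split_ifs with hj
    · exact hpq j hj
    · rfl
  have hgP : g = g ∘ P := by
    funext p
    refine hdep _ _ fun j hj => ?_
    rw [hP, if_pos hj]
  have key : ∀ p z, fderiv ℝ g p z = fderiv ℝ g (P p) (P z) := by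
    intro p z
    conv_lhs => rw [hgP]
    rw [fderiv_comp p (hg _) P.differentiableAt, P.fderiv]
    rfl
  rw [key Y v, key Z w, hPcongr _ _ hYZ, hPcongr _ _ hvw]

/-- Smoothness and triangular dependence of the recursively defined maps `Φ̂_k`. The two are proved
together: dependence at stage `k + 1` needs differentiability at stage `k`. -/
lemma flatMap_smooth_dep {m r : ℕ}
    {Δ h : Fin r → ((Fin (r + 1) → (Fin m → ℝ)) → (Fin m → ℝ))}
    (hΔdep : ∀ i : Fin r, ∀ p q : Fin (r + 1) → (Fin m → ℝ),
      (∀ j : Fin (r + 1), (j : ℕ) ≤ (i : ℕ) → p j = q j) → Δ i p = Δ i q)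
    (hΔsmooth : ∀ i : Fin r, ContDiff ℝ (⊤ : ℕ∞) (Δ i))
    (hhdep : ∀ k : Fin r, ∀ p q : Fin (r + 1) → (Fin m → ℝ),
      (∀ j : Fin (r + 1), (j : ℕ) ≤ (k : ℕ) + 1 → p j = q j) → h k p = h k q)
    (hhsmooth : ∀ k : Fin r, ContDiff ℝ (⊤ : ℕ∞) (h k))
    {Φ : Fin (r + 1) → ((Fin (r + 1) → (Fin m → ℝ)) → (Fin m → ℝ))}
    (hΦ0 : ∀ Y : Fin (r + 1) → (Fin m → ℝ), Φ 0 Y = Y 0)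
    (hΦrec : ∀ k : Fin r, ∀ Y : Fin (r + 1) → (Fin m → ℝ),
      Φ k.succ Y =
        h k (Function.update (fun j : Fin (r + 1) => Φ j Y) k.succ
          (fderiv ℝ (Φ k.castSucc) Y (Fin.snoc (fun j : Fin r => Y j.succ) 0)
            - Δ k (fun j : Fin (r + 1) => Φ j Y)))) (k : Fin (r + 1)) :
    ContDiff ℝ (⊤ : ℕ∞) (Φ k) ∧
      ∀ Y Z : Fin (r + 1) → (Fin m → ℝ),
        (∀ j : Fin (r + 1), (j : ℕ) ≤ (k : ℕ) → Y j = Z j) → Φ k Y = Φ k Z := by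
  induction k using WellFoundedLT.induction with
  | ind k ih =>
  cases k using Fin.cases with
  | zero =>
    refine ⟨?_, fun Y Z hYZ => ?_⟩
    · rw [show Φ 0 = fun Y => Y 0 from funext hΦ0]
      fun_prop
    · rw [hΦ0, hΦ0]
      exact hYZ 0 le_rfl
  | succ k =>
    have ih' : ∀ j : Fin (r + 1), (j : ℕ) ≤ k → ContDiff ℝ (⊤ : ℕ∞) (Φ j) ∧
        ∀ Y Z : Fin (r + 1) → (Fin m → ℝ),
          (∀ i : Fin (r + 1), (i : ℕ) ≤ (j : ℕ) → Y i = Z i) → Φ j Y = Φ j Z := by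
      intro j hj
      apply ih j
      rw [Fin.lt_def, Fin.val_succ]
      omega
    obtain ⟨hks, hkd⟩ := ih' k.castSucc le_rfl
    refine ⟨?_, fun Y Z hYZ => ?_⟩
    · -- Replace the entries not yet known to be smooth by `0`; `h k` and `Δ k` ignore them.
      let T : (Fin (r + 1) → (Fin m → ℝ)) → Fin (r + 1) → (Fin m → ℝ) :=
        fun Y j => if (j : ℕ) ≤ k then Φ j Y else 0
      have hT : ContDiff ℝ (⊤ : ℕ∞) T := by
        rw [contDiff_pi]
        intro j
        by_cases hj : (j : ℕ) ≤ k
        · simpa only [T, if_pos hj] using (ih' j hj).1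
        · simpa only [T, if_neg hj] using contDiff_const
      have hS : ContDiff ℝ (⊤ : ℕ∞) (fun Y : Fin (r + 1) → (Fin m → ℝ) =>
          (Fin.snoc (fun j : Fin r => Y j.succ) 0 : Fin (r + 1) → (Fin m → ℝ))) := by
        rw [contDiff_pi]
        intro j
        cases j using Fin.lastCases with
        | last => simpa only [Fin.snoc_last] using contDiff_const
        | cast j =>
          simp only [Fin.snoc_castSucc]
          fun_prop
      have hD : ContDiff ℝ (⊤ : ℕ∞) (fun Y : Fin (r + 1) → (Fin m → ℝ) =>
          fderiv ℝ (Φ k.castSucc) Y (Fin.snoc (fun j : Fin r => Y j.succ) 0)) :=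
        (hks.fderiv_right (m := (⊤ : ℕ∞)) le_rfl).clm_apply hS
      have hΦT : Φ k.succ = fun Y => h k (Function.update (T Y) k.succ
          (fderiv ℝ (Φ k.castSucc) Y (Fin.snoc (fun j : Fin r => Y j.succ) 0)
            - Δ k (T Y))) := by
        funext Y
        rw [hΦrec]
        have hΔT : Δ k (fun j => Φ j Y) = Δ k (T Y) := by
          refine hΔdep k _ _ fun j hj => ?_
          simp only [T, if_pos hj]
        rw [hΔT]
        refine hhdep k _ _ fun j hj => ?_
        by_cases hjk : j = k.succ
        · subst hjk
          simp
        · have hj' : (j : ℕ) ≤ k := by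
            have : (j : ℕ) ≠ k + 1 := fun e => hjk (Fin.ext (by simpa using e))
            omega
          simp only [Function.update_of_ne hjk, T, if_pos hj']
      rw [hΦT]
      refine (hhsmooth k).comp ?_
      rw [contDiff_pi]
      intro j
      by_cases hjk : j = k.succ
      · subst hjk
        simp only [Function.update_self]
        exact hD.sub ((hΔsmooth k).comp hT)
      · simp only [Function.update_of_ne hjk]
        exact contDiff_pi.1 hT j
    · rw [Fin.val_succ] at hYZ
      have hΦeq : ∀ j : Fin (r + 1), (j : ℕ) ≤ k → Φ j Y = Φ j Z := fun j hj =>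
        (ih' j hj).2 Y Z fun i hi => hYZ i (by omega)
      rw [hΦrec, hΦrec, hΔdep k _ _ hΦeq,
        fderiv_congr_of_dep (hks.differentiable (by simp)) hkd (Z := Z)
          (w := Fin.snoc (fun j : Fin r => Z j.succ) 0)
          (fun j hj => hYZ j (by simp at hj; omega))]
      · refine hhdep k _ _ fun j hj => ?_
        by_cases hjk : j = k.succ
        · subst hjk
          simp
        · have hj' : (j : ℕ) ≤ k := by
            have : (j : ℕ) ≠ k + 1 := fun e => hjk (Fin.ext (by simpa using e))
            omega
          simp only [Function.update_of_ne hjk, hΦeq j hj']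
      · intro j hj
        cases j using Fin.lastCases with
        | last => simp
        | cast j =>
          simp only [Fin.snoc_castSucc]
          exact hYZ _ (by simpa using hj)

/-!
Statement 4 (Theorem 3 of the paper): construction of the flatness
diffeomorphism of the augmented system from the implicit maps `h_k` of the
nominal system.

Encoding: the full state-input tuple is `Fin.snoc (fun i => x i t) (u t) :
Fin (r+1) → (Fin m → ℝ)` (sub-state `x_i` at 0-indexed slot `i - 1`, the input
`u = x_{r+1}` at slot `r`).  The map `h_k` (1-indexed `k = k0 + 1` for
`k0 : Fin r`) takes `(x_1, …, x_k, c)` and is represented as a map of full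
tuples where `c` is placed at slot `k0.succ`; it depends only on slots
`j ≤ k0 + 1`.  The residual component `Δ̂_i` depends only on slots `j ≤ i0`.

The maps `Φ̂_k` (`k = 1, …, r+1`, with `Ψ̂ = Φ̂_{r+1}`) are encoded as
`Φ : Fin (r+1) → _`, where `Φ k0` represents `Φ̂_{k0+1}` as a function of the
tuple of derivatives `Y = (y, ẏ, …, y^{(r)})` (depending only on the first
`k0 + 1` entries).  The recursion defining `Φ̂` is expressed via the shift
`Fin.snoc (fun j : Fin r => Y j.succ) 0`, representing `(ẏ, …, y^{(k−1)}, …)`,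
to which the total Jacobian `DΦ̂_{k−1} = fderiv ℝ (Φ k0.castSucc) Y` is applied
(`Φ̂_{k−1}` does not depend on the trailing entries).  The conclusion states
both smoothness of the `Φ̂_k` and the recovery of states and input along any
trajectory of the augmented dynamics staying in `N`.
-/
theorem stmt4
    (m r : ℕ) (hm : 1 ≤ m) (hr : 1 ≤ r)
    (f Δ : Fin r → ((Fin (r + 1) → (Fin m → ℝ)) → (Fin m → ℝ)))
    (xstar : Fin (r + 1) → (Fin m → ℝ))
    -- `f̄_i` depends only on `x_1, …, x_{i+1}` (pure-feedback form)
    (hfdep : ∀ i : Fin r, ∀ p q : Fin (r + 1) → (Fin m → ℝ),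
      (∀ j : Fin (r + 1), (j : ℕ) ≤ (i : ℕ) + 1 → p j = q j) → f i p = f i q)
    -- the residual is lower-triangular: `Δ̂_i` depends only on `x_1, …, x_i`
    (hΔdep : ∀ i : Fin r, ∀ p q : Fin (r + 1) → (Fin m → ℝ),
      (∀ j : Fin (r + 1), (j : ℕ) ≤ (i : ℕ) → p j = q j) → Δ i p = Δ i q)
    -- each `Δ̂_i` is `C^∞`
    (hΔsmooth : ∀ i : Fin r, ContDiff ℝ (⊤ : ℕ∞) (Δ i))
    -- `N` is an open neighborhood of the operating point `(x*, u*)`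
    (N : Set (Fin (r + 1) → (Fin m → ℝ))) (hN : IsOpen N) (hx : xstar ∈ N)
    -- the implicit maps `h_k` of the nominal system
    (h : Fin r → ((Fin (r + 1) → (Fin m → ℝ)) → (Fin m → ℝ)))
    -- `h_k` is a function of `(x_1, …, x_k, c)` only
    (hhdep : ∀ k : Fin r, ∀ p q : Fin (r + 1) → (Fin m → ℝ),
      (∀ j : Fin (r + 1), (j : ℕ) ≤ (k : ℕ) + 1 → p j = q j) → h k p = h k q)
    -- each `h_k` is `C^∞`
    (hhsmooth : ∀ k : Fin r, ContDiff ℝ (⊤ : ℕ∞) (h k))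
    -- `h_k(x_1, …, x_k, f̄_k(x_1, …, x_{k+1})) = x_{k+1}` for all `(x, u) ∈ N`
    (hh : ∀ k : Fin r, ∀ p ∈ N, h k (Function.update p k.succ (f k p)) = p k.succ)
    -- the recursively defined maps `Φ̂_1, …, Φ̂_{r+1}` (with `Ψ̂ = Φ̂_{r+1}`)
    (Φ : Fin (r + 1) → ((Fin (r + 1) → (Fin m → ℝ)) → (Fin m → ℝ)))
    -- base case: `Φ̂_1(y) = y`
    (hΦ0 : ∀ Y : Fin (r + 1) → (Fin m → ℝ), Φ 0 Y = Y 0)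
    -- recursion: `Φ̂_k = h_{k−1}(Φ̂_1, …, Φ̂_{k−1},
    --                    DΦ̂_{k−1}·(ẏ, …, y^{(k−1)}) − Δ̂_{k−1}(Φ̂_1, …, Φ̂_{k−1}))`
    (hΦrec : ∀ k : Fin r, ∀ Y : Fin (r + 1) → (Fin m → ℝ),
      Φ k.succ Y =
        h k (Function.update (fun j : Fin (r + 1) => Φ j Y) k.succ
          (fderiv ℝ (Φ k.castSucc) Y (Fin.snoc (fun j : Fin r => Y j.succ) 0)
            - Δ k (fun j : Fin (r + 1) => Φ j Y)))) :
    -- conclusion (i): each `Φ̂_k` is `C^∞`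
    (∀ k : Fin (r + 1), ContDiff ℝ (⊤ : ℕ∞) (Φ k)) ∧
    -- conclusion (ii): recovery of states and input along trajectories of the
    -- augmented dynamics staying in `N`
    (∀ (J : Set ℝ), IsOpen J → J.OrdConnected →
      ∀ (x : Fin r → ℝ → (Fin m → ℝ)) (u : ℝ → (Fin m → ℝ))
        (y : ℕ → ℝ → (Fin m → ℝ)),
        -- `y = x_1` together with its higher derivatives on `J`
        y 0 = x ⟨0, hr⟩ →
        (∀ j : ℕ, j < r → ∀ t ∈ J, HasDerivAt (y j) (y (j + 1) t) t) →
        -- `u` is continuous on `J`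
        ContinuousOn u J →
        -- the curves satisfy the augmented dynamics `ẋ_i = f̄_i + Δ̂_i` on `J`
        (∀ t ∈ J, ∀ i : Fin r,
          HasDerivAt (x i)
            (f i (Fin.snoc (fun i' => x i' t) (u t))
              + Δ i (Fin.snoc (fun i' => x i' t) (u t))) t) →
        -- the trajectory remains in `N`
        (∀ t ∈ J, Fin.snoc (fun i' => x i' t) (u t) ∈ N) →
        ∀ t ∈ J,
          (∀ k : Fin r, x k t = Φ k.castSucc (fun j : Fin (r + 1) => y (j : ℕ) t)) ∧
          u t = Φ (Fin.last r) (fun j : Fin (r + 1) => y (j : ℕ) t)) := by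
  have hΦ := flatMap_smooth_dep hΔdep hΔsmooth hhdep hhsmooth hΦ0 hΦrec
  refine ⟨fun k => (hΦ k).1, ?_⟩
  intro J hJ _ x u y hy0 hy _ hdyn hmem
  have key : ∀ k : Fin (r + 1), ∀ t ∈ J,
      (Fin.snoc (fun i' => x i' t) (u t) : Fin (r + 1) → (Fin m → ℝ)) k =
        Φ k (fun j : Fin (r + 1) => y (j : ℕ) t) := by
    intro k
    induction k using WellFoundedLT.induction with
    | ind k ih =>
    cases k using Fin.cases with
    | zero =>
      intro t _
      rw [hΦ0, show (0 : Fin (r + 1)) = Fin.castSucc ⟨0, hr⟩ from rfl, Fin.snoc_castSucc]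
      exact (congrFun hy0 t).symm
    | succ k =>
      intro t ht
      have ih' : ∀ j : Fin (r + 1), (j : ℕ) ≤ k → ∀ s ∈ J,
          (Fin.snoc (fun i' => x i' s) (u s) : Fin (r + 1) → (Fin m → ℝ)) j =
            Φ j (fun j : Fin (r + 1) => y (j : ℕ) s) := by
        intro j hj
        apply ih j
        rw [Fin.lt_def, Fin.val_succ]
        omega
      -- The jet of `y` with its top entry frozen at time `t`.
      let Z : ℝ → Fin (r + 1) → (Fin m → ℝ) :=
        fun s => Fin.snoc (fun j : Fin r => y (j : ℕ) s) (y r t)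
      have hZt : Z t = fun j : Fin (r + 1) => y (j : ℕ) t := by
        funext j
        cases j using Fin.lastCases with
        | last => simp [Z]
        | cast j => simp [Z]
      have hZ : HasDerivAt Z (Fin.snoc (fun j : Fin r => y ((j.succ : Fin (r + 1)) : ℕ) t) 0) t := by
        rw [hasDerivAt_pi]
        intro j
        cases j using Fin.lastCases with
        | last => simpa only [Z, Fin.snoc_last] using hasDerivAt_const t (y r t)
        | cast j => simpa only [Z, Fin.snoc_castSucc, Fin.val_succ] using hy j j.isLt t ht
      have hdiff : DifferentiableAt ℝ (Φ k.castSucc) (Z t) :=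
        (hΦ k.castSucc).1.differentiable (by simp) _
      have hcomp := hdiff.hasFDerivAt.comp_hasDerivAt t hZ
      have hxeq : x k =ᶠ[nhds t] Φ k.castSucc ∘ Z := by
        filter_upwards [hJ.mem_nhds ht] with s hs
        have h1 := ih' k.castSucc le_rfl s hs
        rw [Fin.snoc_castSucc] at h1
        rw [h1]
        refine (hΦ k.castSucc).2 _ _ fun j hj => ?_
        cases j using Fin.lastCases with
        | last =>
          have := k.isLt
          simp at hj
          omega
        | cast j => simp [Z]
      have hder := (hdyn t ht k).unique (hcomp.congr_of_eventuallyEq hxeq)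
      rw [hZt] at hder
      rw [← hh k _ (hmem t ht), hΦrec, ← hder,
        hΔdep k _ _ (fun j hj => ih' j hj t ht), add_sub_cancel_right]
      refine hhdep k _ _ fun j hj => ?_
      by_cases hjk : j = k.succ
      · subst hjk
        simp
      · have hj' : (j : ℕ) ≤ k := by
          have : (j : ℕ) ≠ k + 1 := fun e => hjk (Fin.ext (by simpa using e))
          omega
        simp only [Function.update_of_ne hjk]
        exact ih' j hj' t ht
  intro t ht
  refine ⟨fun k => ?_, ?_⟩
  · simpa only [Fin.snoc_castSucc] using key k.castSucc t ht
  · simpa only [Fin.snoc_last] using key (Fin.last r) t ht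
end

section
/- (Flat-output reconstruction of thrust and attitude for the 2D quadrotor augmented with isotropic linear drag; the map Φ̂₃ of the running example.) Let 𝔪 > 0, g ∈ ℝ, C_r ∈ ℝ. Let J be an open interval and let p : J → ℝ² be twice differentiable and F, θ : J → ℝ satisfy the drag-augmented dynamics 𝔪 · p̈(t) = ( −F(t) sin θ(t), F(t) cos θ(t) ) − (0, 𝔪 g) − C_r · ṗ(t), with F(t) > 0 and θ(t) ∈ (−π, π] for all t ∈ J. Then for all t ∈ J: F(t) = 𝔪 · √( ( p̈₁(t) + (C_r/𝔪) ṗ₁(t) )² + ( p̈₂(t) + g + (C_r/𝔪) ṗ₂(t) )² ), and θ(t) equals the argument of the complex number ( p̈₂(t) + g + (C_r/𝔪) ṗ₂(t) ) + ( −p̈₁(t) − (C_r/𝔪) ṗ₁(t) )·i. -/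
/-!
Dividing the dynamics by `𝔪` shows that the complex number
`(p̈₂ + g + (C_r/𝔪) ṗ₂) + (−p̈₁ − (C_r/𝔪) ṗ₁)·i` is `(F/𝔪)(cos θ + i sin θ)`.
As `F/𝔪 > 0` and `θ ∈ (−π, π]`, this is its polar form: its modulus is `F/𝔪` and its
argument is `θ`.
-/

/-!
Statement 9: flat-output reconstruction of thrust and attitude for the 2D
quadrotor augmented with isotropic linear drag (the map `Φ̂₃` of the running
example).  The position is `p = (p₁, p₂)`, with velocity `(v₁, v₂)` and
acceleration `(a₁, a₂)` encoding `ṗ` and `p̈` on the open interval `J`.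
The attitude is recovered as the complex argument (in `(−π, π]`) of
`(p̈₂ + g + (C_r/𝔪) ṗ₂) + (−p̈₁ − (C_r/𝔪) ṗ₁)·i`.
-/
theorem stmt9
    (𝔪 g Cr : ℝ) (h𝔪 : 0 < 𝔪)
    -- `J` is an open interval
    (J : Set ℝ) (hJ : IsOpen J) (hJ' : J.OrdConnected)
    (p₁ p₂ v₁ v₂ a₁ a₂ F θ : ℝ → ℝ)
    -- `p` is twice differentiable on `J`, with first derivative `v` and second
    -- derivative `a`
    (hp₁ : ∀ t ∈ J, HasDerivAt p₁ (v₁ t) t) (hv₁ : ∀ t ∈ J, HasDerivAt v₁ (a₁ t) t)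
    (hp₂ : ∀ t ∈ J, HasDerivAt p₂ (v₂ t) t) (hv₂ : ∀ t ∈ J, HasDerivAt v₂ (a₂ t) t)
    -- drag-augmented dynamics
    -- `𝔪 p̈ = (−F sin θ, F cos θ) − (0, 𝔪 g) − C_r ṗ` on `J`
    (hdyn₁ : ∀ t ∈ J, 𝔪 * a₁ t = -F t * Real.sin (θ t) - Cr * v₁ t)
    (hdyn₂ : ∀ t ∈ J, 𝔪 * a₂ t = F t * Real.cos (θ t) - 𝔪 * g - Cr * v₂ t)
    -- positive thrust and normalized attitude
    (hF : ∀ t ∈ J, 0 < F t)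
    (hθ : ∀ t ∈ J, θ t ∈ Set.Ioc (-Real.pi) Real.pi) :
    ∀ t ∈ J,
      F t = 𝔪 * Real.sqrt ((a₁ t + (Cr / 𝔪) * v₁ t) ^ 2
              + (a₂ t + g + (Cr / 𝔪) * v₂ t) ^ 2) ∧
      θ t = Complex.arg (Complex.ofReal (a₂ t + g + (Cr / 𝔪) * v₂ t)
              + Complex.ofReal (-a₁ t - (Cr / 𝔪) * v₁ t) * Complex.I) := by
  intro t ht
  have hm : 𝔪 ≠ 0 := h𝔪.ne'
  have hr : 0 < F t / 𝔪 := div_pos (hF t ht) h𝔪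
  have e₁ : a₁ t + (Cr / 𝔪) * v₁ t = -(F t / 𝔪 * Real.sin (θ t)) := by
    field_simp
    linarith [hdyn₁ t ht]
  have e₂ : a₂ t + g + (Cr / 𝔪) * v₂ t = F t / 𝔪 * Real.cos (θ t) := by
    field_simp
    linarith [hdyn₂ t ht]
  have e₃ : -a₁ t - (Cr / 𝔪) * v₁ t = F t / 𝔪 * Real.sin (θ t) := by
    linarith
  constructor
  · have hsq : (-(F t / 𝔪 * Real.sin (θ t))) ^ 2 + (F t / 𝔪 * Real.cos (θ t)) ^ 2
        = (F t / 𝔪) ^ 2 := by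
      linear_combination (F t / 𝔪) ^ 2 * Real.sin_sq_add_cos_sq (θ t)
    rw [e₁, e₂, hsq, Real.sqrt_sq hr.le]
    field_simp
  · rw [e₂, e₃]
    conv_lhs => rw [← Complex.arg_mul_cos_add_sin_mul_I hr (hθ t ht)]
    congr 1
    push_cast
    ring
end
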